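/- Let q ∈ ℂ with 0 < |q| < 1, let x ∈ ℂ∖{0} with x² ∉ q^ℤ, and let t ∈ ℂ∖{0} with t ∉ q^ℤ. Then the Wronskian combination of the two solutions at t = ∞ of the q-difference equation tq^{−1} f(q^{−1}t) + (1 − (x+x^{−1})t) f(t) + tq f(qt) = 0 satisfies g^{(0,x^{−1})}(t,x,q) · g^{(0,x)}(qt,x,q) − g^{(0,x^{−1})}(qt,x,q) · g^{(0,x)}(t,x,q) = q^{−1} x t^{−2} · θ(q^{−1}x;q)² θ(tx;q) θ(tx^{−1};q) / ( (1−x)² θ(x^{−2};q) θ(t;q)² (q;q)_∞³ ). -/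

import Mathlib

open Finset Filter

/-- Finite q-Pochhammer symbol `(x;q)_k = ∏_{j=0}^{k-1} (1 - x q^j)`. -/
noncomputable def qPoch (x q : ℂ) (k : ℕ) : ℂ := ∏ j ∈ Finset.range k, (1 - x * q ^ j)

/-- Infinite q-Pochhammer symbol `(x;q)_∞ = ∏_{j=0}^{∞} (1 - x q^j)`. -/
noncomputable def qPochInf (x q : ℂ) : ℂ := ∏' j : ℕ, (1 - x * q ^ j)

/-- The Jacobi theta function `θ(t;q) = Σ_{k∈ℤ} (−1)^k q^{k(k+1)/2} t^k`. -/
noncomputable def jtheta (t q : ℂ) : ℂ :=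
  ∑' k : ℤ, (-1 : ℂ) ^ k * q ^ (k * (k + 1) / 2) * t ^ k

/-- The derivative `θ'(t;q) = Σ_{k∈ℤ} (−1)^k k q^{k(k+1)/2} t^k` (with respect to t d/dt). -/
noncomputable def jthetaD (t q : ℂ) : ℂ :=
  ∑' k : ℤ, (-1 : ℂ) ^ k * (k : ℂ) * q ^ (k * (k + 1) / 2) * t ^ k

/-- The Eisenstein-type series `E₁(q) = 1 − 4 Σ_{j=1}^∞ q^j/(1−q^j)`. -/
noncomputable def E1 (q : ℂ) : ℂ := 1 - 4 * ∑' j : ℕ, q ^ (j + 1) / (1 - q ^ (j + 1))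

/-- The Appell-Lerch sum
`AL(t,λ,q) = θ(λ;q)⁻¹ Σ_{ℓ∈ℤ} (−1)^ℓ q^{ℓ(ℓ+1)/2} λ^ℓ / (1 − λ t q^ℓ)`. -/
noncomputable def AL (t lam q : ℂ) : ℂ :=
  (jtheta lam q)⁻¹ *
    ∑' k : ℤ, (-1 : ℂ) ^ k * q ^ (k * (k + 1) / 2) * lam ^ k / (1 - lam * t * q ^ k)

/-- The solution `g^{(0,0)}(t,q) = Σ_{k≥0} (−1)^k q^{k(k+1)/2} (q;q)_k^{−2} t^{−1−k}`. -/
noncomputable def g00 (t q : ℂ) : ℂ :=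
  ∑' k : ℕ, (-1 : ℂ) ^ k * q ^ (k * (k + 1) / 2) / (qPoch q q k) ^ 2 * t ^ (-1 - (k : ℤ))

/-- The solution `g^{(0,1)}(t,q)`. -/
noncomputable def g01 (t q : ℂ) : ℂ :=
  ∑' k : ℕ,
    (E1 q / 2 - 1 / 2 - jthetaD t⁻¹ q / jtheta t⁻¹ q +
        ∑ j ∈ Finset.range k, (1 + q ^ (j + 1)) / (1 - q ^ (j + 1))) *
      ((-1 : ℂ) ^ k * q ^ (k * (k + 1) / 2) / (qPoch q q k) ^ 2 * t ^ (-1 - (k : ℤ)))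

/-- The solution `f^{(−1)}(t,x,q)` at `t = 0` of the x-deformed 4₁ equation. -/
noncomputable def fneg1 (t x q : ℂ) : ℂ :=
  jtheta (q⁻¹ * x) q / ((1 - x) * jtheta (q⁻¹ * t) q * qPochInf q q) *
    ∑' k : ℕ, ∑ l ∈ Finset.range (k + 1),
      (-1 : ℂ) ^ k * q ^ (k * (k + 1) / 2) * x ^ (2 * (l : ℤ) - k) * t ^ k /
        (qPoch q q l * qPoch q q (k - l))

/-- The solution `g^{(0,x^{−1})}(t,x,q)` at `t = ∞` of the x-deformed 4₁ equation.
The solution `g^{(0,x)}(t,x,q)` is `gxinv t x⁻¹ q`. -/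
noncomputable def gxinv (t x q : ℂ) : ℂ :=
  jtheta (q⁻¹ * x) q * jtheta (t * x) q * qPochInf (q * x ^ 2) q /
      (jtheta t q * jtheta (x ^ 2) q * (1 - x) * qPochInf q q) *
    ∑' k : ℕ, (-1 : ℂ) ^ k * q ^ (k * (k + 1) / 2) * x ^ k * t ^ (-(k : ℤ) - 1) /
      (qPoch q q k * qPoch (q * x ^ 2) q k)

/-!
At `t = ∞` both solutions are a theta quotient times `t⁻¹ Φ(x^{±2}, x^{±1} / t)`, where `Φ` is the
power series of the Hahn–Exton `q`-Bessel function. The second-order `q`-difference equation of `Φ`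
makes the combination `x Φ(x², qxu) Φ(x⁻², x⁻¹u) - x⁻¹ Φ(x², xu) Φ(x⁻², qx⁻¹u)` invariant under
`u ↦ qu`, and letting `qⁿu → 0` evaluates it as `x - x⁻¹`. The theta quotients are then simplified
with the Jacobi triple product, which is the limit of the finite product formula for
`(qt;q)_M (t⁻¹;q)_N`, a consequence of the two `q`-Pascal rules.
-/

open scoped Topology

/-! ### Summation lemmas -/

lemma summable_of_succ_eq_mul_of_tendsto {R : Type*} [NormedRing R] [CompleteSpace R]
    {f r : ℕ → R} {l : R} (hf : ∀ n, f (n + 1) = r n * f n) (hr : Tendsto r atTop (𝓝 l))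
    (hl : ‖l‖ < 1) : Summable f := by
  obtain ⟨ρ, hlρ, hρ⟩ := exists_between hl
  refine summable_of_ratio_norm_eventually_le hρ ?_
  filter_upwards [hr.norm.eventually_le_const hlρ] with n hn
  rw [hf]
  exact (norm_mul_le _ _).trans (by gcongr)

lemma hasSum_one_sub_mul_zpow {K : Type*} [Field K] [TopologicalSpace K] [IsTopologicalRing K]
    {a b : ℤ → K} {c t s : K} {d : ℤ} (ht : t ≠ 0) (h : HasSum (fun k ↦ a k * t ^ k) s)
    (hb : ∀ k, b k = a k - c * a (k - d)) :
    HasSum (fun k ↦ b k * t ^ k) ((1 - c * t ^ d) * s) := by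
  rw [sub_mul, one_mul]
  refine (h.sub (((Equiv.subRight d).hasSum_iff.mpr h).mul_left (c * t ^ d))).congr_fun fun k ↦ ?_
  change _ = a k * t ^ k - c * t ^ d * (a (k - d) * t ^ (k - d))
  rw [hb, zpow_sub₀ ht]
  field_simp

/-! ### `q`-Pochhammer symbols -/

section QPochhammer

variable {x q : ℂ}

lemma qPoch_zero (x q : ℂ) : qPoch x q 0 = 1 := prod_range_zero _

lemma qPoch_succ (x q : ℂ) (k : ℕ) : qPoch x q (k + 1) = qPoch x q k * (1 - x * q ^ k) :=
  prod_range_succ _ _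

lemma summable_norm_neg_mul_pow (x : ℂ) (hq : ‖q‖ < 1) :
    Summable fun j : ℕ ↦ ‖-(x * q ^ j)‖ := by
  simpa only [norm_neg, norm_mul, norm_pow] using
    (summable_geometric_of_lt_one (norm_nonneg q) hq).mul_left ‖x‖

lemma multipliable_one_sub_mul_pow (x : ℂ) (hq : ‖q‖ < 1) :
    Multipliable fun j : ℕ ↦ 1 - x * q ^ j := by
  simpa only [sub_eq_add_neg] using
    multipliable_one_add_of_summable (summable_norm_neg_mul_pow x hq)

lemma tendsto_qPoch (x : ℂ) (hq : ‖q‖ < 1) : Tendsto (qPoch x q) atTop (𝓝 (qPochInf x q)) :=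
  (multipliable_one_sub_mul_pow x hq).hasProd.tendsto_prod_nat

lemma qPochInf_ne_zero (hq : ‖q‖ < 1) (h : ∀ j : ℕ, x * q ^ j ≠ 1) : qPochInf x q ≠ 0 := by
  simpa only [qPochInf, sub_eq_add_neg] using
    tprod_one_add_ne_zero_of_summable (f := fun j : ℕ ↦ -(x * q ^ j))
      (fun j ↦ by simpa only [← sub_eq_add_neg] using sub_ne_zero.mpr (h j).symm)
      (summable_norm_neg_mul_pow x hq)

lemma qPochInf_eq_one_sub_mul (x : ℂ) (hq : ‖q‖ < 1) :
    qPochInf x q = (1 - x) * qPochInf (q * x) q := by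
  have hsucc (n : ℕ) : qPoch x q (n + 1) = (1 - x) * qPoch (q * x) q n := by
    rw [qPoch, prod_range_succ', pow_zero, mul_one, mul_comm]
    exact congrArg _ (prod_congr rfl fun j _ ↦ by ring)
  refine tendsto_nhds_unique ((tendsto_qPoch x hq).comp (tendsto_add_atTop_nat 1)) ?_
  exact ((tendsto_qPoch (q * x) hq).const_mul (1 - x)).congr fun n ↦ (hsucc n).symm

lemma self_mul_pow_ne_one {K : Type*} [NormedDivisionRing K] {q : K} (hq : ‖q‖ < 1) (j : ℕ) :
    q * q ^ j ≠ 1 := fun h ↦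
  (pow_lt_one₀ (norm_nonneg q) hq j.succ_ne_zero).ne
    (by rw [← norm_pow, pow_succ', h, norm_one])

lemma mul_pow_ne_one_of_forall_ne_zpow {K : Type*} [Field K] {q z : K} (h : ∀ n : ℤ, z ≠ q ^ n)
    (j : ℕ) : q * z * q ^ j ≠ 1 := fun hj ↦
  h (-(j + 1 : ℕ)) <| by
    rw [zpow_neg, zpow_natCast]
    exact eq_inv_of_mul_eq_one_left (by rw [← hj]; ring)

lemma inv_ne_zpow_of_forall_ne_zpow {K : Type*} [DivisionRing K] {q z : K}
    (h : ∀ n : ℤ, z ≠ q ^ n) (n : ℤ) : z⁻¹ ≠ q ^ n := fun hn ↦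
  h (-n) (by rw [zpow_neg, ← hn, inv_inv])

end QPochhammer

/-! ### Gaussian binomial coefficients -/

section GaussianBinomial

variable {q : ℂ}

/-- The reciprocal `1 / (q;q)_k`, extended by zero to negative `k`. -/
noncomputable def invQPoch (q : ℂ) : ℤ → ℂ
  | .ofNat k => (qPoch q q k)⁻¹
  | .negSucc _ => 0

lemma invQPoch_eq_mul_succ (hq : q ≠ 0) (hq' : ∀ j : ℕ, q * q ^ j ≠ 1) (k : ℤ) :
    invQPoch q k = (1 - q ^ (k + 1)) * invQPoch q (k + 1) := by
  match k with
  | .ofNat n =>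
    have hn : 1 - q * q ^ n ≠ 0 := sub_ne_zero.mpr (hq' n).symm
    change (qPoch q q n)⁻¹ = (1 - q ^ ((n : ℤ) + 1)) * (qPoch q q (n + 1))⁻¹
    rw [qPoch_succ, zpow_add_one₀ hq, zpow_natCast, mul_comm _ q, mul_inv, mul_left_comm,
      mul_inv_cancel₀ hn, mul_one]
  | .negSucc 0 => simp [invQPoch]
  | .negSucc (n + 1) => exact (mul_zero _).symm

lemma tendsto_invQPoch (hq : ‖q‖ < 1) :
    Tendsto (invQPoch q) atTop (𝓝 (qPochInf q q)⁻¹) := by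
  rw [← Nat.map_cast_int_atTop, tendsto_map'_iff]
  exact (tendsto_qPoch q hq).inv₀ (qPochInf_ne_zero hq (self_mul_pow_ne_one hq))

lemma exists_norm_invQPoch_le (hq : ‖q‖ < 1) : ∃ C, ∀ k, ‖invQPoch q k‖ ≤ C := by
  obtain ⟨C, hC⟩ := (Metric.isBounded_range_of_tendsto _ ((tendsto_qPoch q hq).inv₀
    (qPochInf_ne_zero hq (self_mul_pow_ne_one hq)))).exists_norm_le
  refine ⟨C, fun k ↦ ?_⟩
  match k with
  | .ofNat n => exact hC _ ⟨n, rfl⟩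
  | .negSucc _ => exact norm_zero.trans_le ((norm_nonneg _).trans (hC _ ⟨0, rfl⟩))

/-- The Gaussian binomial coefficient `(q;q)_N / ((q;q)_m (q;q)_{N-m})`. The lower index is an
integer and the coefficient vanishes unless `0 ≤ m ≤ N`, so that sums may run over all of `ℤ`. -/
noncomputable def qBinom (q : ℂ) (N : ℕ) (m : ℤ) : ℂ :=
  qPoch q q N * (invQPoch q m * invQPoch q (N - m))

lemma qBinom_zero_left (q : ℂ) (m : ℤ) : qBinom q 0 m = if m = 0 then 1 else 0 := by
  match m with
  | .ofNat 0 => simp [qBinom, invQPoch, qPoch_zero]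
  | .ofNat (n + 1) => exact (congrArg _ (mul_zero _)).trans (mul_zero _)
  | .negSucc n => simp [qBinom, invQPoch]

lemma qBinom_symm (q : ℂ) (N : ℕ) (m : ℤ) : qBinom q N (N - m) = qBinom q N m := by
  rw [qBinom, qBinom, sub_sub_cancel, mul_comm (invQPoch q m)]

lemma qBinom_succ (hq : q ≠ 0) (hq' : ∀ j : ℕ, q * q ^ j ≠ 1) (N : ℕ) (m : ℤ) :
    qBinom q (N + 1) m = qBinom q N m + q ^ (N + 1 - m) * qBinom q N (m - 1) := by
  have hm := invQPoch_eq_mul_succ hq hq' (m - 1)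
  have hNm := invQPoch_eq_mul_succ hq hq' (N - m)
  have hpow : q ^ (N + 1 - m) * q ^ m = q * q ^ N := by
    rw [← zpow_add₀ hq, sub_add_cancel, zpow_add_one₀ hq, zpow_natCast, mul_comm]
  rw [sub_add_cancel] at hm
  rw [sub_add_eq_add_sub] at hNm
  rw [qBinom, qBinom, qBinom, qPoch_succ, hm, hNm, Nat.cast_succ,
    show (N : ℤ) - (m - 1) = N + 1 - m by ring]
  linear_combination (-(qPoch q q N * (invQPoch q m * invQPoch q (N + 1 - m)))) * (-hpow)

lemma qBinom_succ' (hq : q ≠ 0) (hq' : ∀ j : ℕ, q * q ^ j ≠ 1) (N : ℕ) (m : ℤ) :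
    qBinom q (N + 1) m = q ^ m * qBinom q N m + qBinom q N (m - 1) := by
  rw [← qBinom_symm q (N + 1), qBinom_succ hq hq', ← qBinom_symm q N m,
    ← qBinom_symm q N (m - 1), Nat.cast_succ, add_comm (q ^ m * _)]
  ring_nf

lemma tendsto_qBinom_add_self (hq : ‖q‖ < 1) (k : ℤ) :
    Tendsto (fun n : ℕ ↦ qBinom q (n + n) (n + k)) atTop (𝓝 (qPochInf q q)⁻¹) := by
  have hadd : Tendsto (fun n : ℕ ↦ (n + k : ℤ)) atTop atTop :=
    tendsto_atTop_add_const_right _ _ tendsto_natCast_atTop_atTop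
  have hsub : Tendsto (fun n : ℕ ↦ ((n + n : ℕ) - (n + k) : ℤ)) atTop atTop := by
    simp only [Nat.cast_add, add_sub_add_left_eq_sub]
    simpa only [sub_eq_add_neg] using
      tendsto_atTop_add_const_right _ (-k) tendsto_natCast_atTop_atTop
  have hlim := ((tendsto_qPoch q hq).comp (tendsto_id.atTop_add_atTop tendsto_id)).mul
    (((tendsto_invQPoch hq).comp hadd).mul ((tendsto_invQPoch hq).comp hsub))
  rwa [mul_inv_cancel_left₀ (qPochInf_ne_zero hq (self_mul_pow_ne_one hq))] at hlim

lemma exists_norm_qBinom_le (hq : ‖q‖ < 1) : ∃ C, ∀ N m, ‖qBinom q N m‖ ≤ C := by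
  obtain ⟨A, hA⟩ := (Metric.isBounded_range_of_tendsto _ (tendsto_qPoch q hq)).exists_norm_le
  obtain ⟨B, hB⟩ := exists_norm_invQPoch_le hq
  refine ⟨A * (B * B), fun N m ↦ ?_⟩
  have hA₀ : 0 ≤ A := (norm_nonneg _).trans (hA _ ⟨0, rfl⟩)
  have hB₀ : 0 ≤ B := (norm_nonneg _).trans (hB 0)
  rw [qBinom, norm_mul, norm_mul]
  gcongr
  exacts [hA _ ⟨N, rfl⟩, hB m, hB _]

end GaussianBinomial

/-! ### The Jacobi triple product -/

section JacobiTripleProduct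

variable {q t : ℂ}

/-- The coefficient `(-1)^k q^{k(k+1)/2}` of `t^k` in the theta series `jtheta t q`. -/
noncomputable def jthetaCoeff (q : ℂ) (k : ℤ) : ℂ := (-1) ^ k * q ^ (k * (k + 1) / 2)

lemma jthetaCoeff_zero (q : ℂ) : jthetaCoeff q 0 = 1 := by simp [jthetaCoeff]

lemma jthetaCoeff_succ (hq : q ≠ 0) (k : ℤ) :
    jthetaCoeff q (k + 1) = -(q ^ (k + 1) * jthetaCoeff q k) := by
  have htri : (k + 1) * (k + 1 + 1) / 2 = k + 1 + k * (k + 1) / 2 := by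
    rw [show (k + 1) * (k + 1 + 1) = (k + 1) * 2 + k * (k + 1) by ring,
      Int.add_ediv_of_dvd_left (dvd_mul_left 2 _), Int.mul_ediv_cancel _ two_ne_zero]
  rw [jthetaCoeff, jthetaCoeff, htri, zpow_add₀ hq (k + 1), zpow_add_one₀ (by norm_num)]
  ring

lemma jthetaCoeff_pred (hq : q ≠ 0) (k : ℤ) :
    jthetaCoeff q (k - 1) = -(q ^ (-k) * jthetaCoeff q k) := by
  have h := jthetaCoeff_succ hq (k - 1)
  rw [sub_add_cancel] at h
  rw [h, mul_neg, neg_neg, ← mul_assoc, ← zpow_add₀ hq, neg_add_cancel, zpow_zero, one_mul]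

lemma summable_jthetaCoeff_mul_zpow (hq₀ : q ≠ 0) (hq : ‖q‖ < 1) (ht : t ≠ 0) :
    Summable fun k : ℤ ↦ jthetaCoeff q k * t ^ k := by
  have hratio (z : ℂ) : Tendsto (fun n : ℕ ↦ -(q ^ n * z)) atTop (𝓝 0) := by
    simpa using ((tendsto_pow_atTop_nhds_zero_of_norm_lt_one hq).mul_const z).neg
  refine .of_nat_of_neg
    (summable_of_succ_eq_mul_of_tendsto (fun n ↦ ?_) (hratio (q * t)) (by simp))
    (summable_of_succ_eq_mul_of_tendsto (fun n ↦ ?_) (hratio t⁻¹) (by simp))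
  · rw [Nat.cast_succ, jthetaCoeff_succ hq₀, zpow_add_one₀ hq₀, zpow_add_one₀ ht, zpow_natCast q]
    ring
  · rw [Nat.cast_succ, neg_add, ← sub_eq_add_neg, jthetaCoeff_pred hq₀, zpow_sub_one₀ ht, neg_neg,
      zpow_natCast q]
    ring

lemma hasSum_finite_tripleProduct (hq : q ≠ 0) (hq' : ∀ j : ℕ, q * q ^ j ≠ 1) (ht : t ≠ 0)
    (M N : ℕ) :
    HasSum (fun k : ℤ ↦ jthetaCoeff q k * qBinom q (M + N) (N + k) * t ^ k)
      (qPoch (q * t) q M * qPoch t⁻¹ q N) := by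
  induction N with
  | zero =>
    induction M with
    | zero =>
      convert hasSum_ite_eq (0 : ℤ) (1 : ℂ) using 2 with k
      · rcases eq_or_ne k 0 with rfl | hk <;> simp [qBinom_zero_left, jthetaCoeff_zero, *]
      · simp [qPoch_zero]
    | succ M ih =>
      rw [qPoch_succ, mul_right_comm, mul_comm, show q * t * q ^ M = q ^ (M + 1) * t ^ (1 : ℤ) by
        rw [zpow_one]; ring]
      refine hasSum_one_sub_mul_zpow ht ih fun k ↦ ?_
      have hpow : q ^ (M + 1 - k : ℤ) = q ^ (M + 1) * q ^ (-k) := by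
        rw [sub_eq_add_neg, zpow_add₀ hq, ← zpow_natCast, Nat.cast_succ]
      simp only [add_zero, Nat.cast_zero, zero_add]
      rw [qBinom_succ hq hq', jthetaCoeff_pred hq, hpow]
      ring
  | succ N ih =>
    rw [qPoch_succ, ← mul_assoc, mul_comm, show t⁻¹ * q ^ N = q ^ N * t ^ (-1 : ℤ) by
      rw [zpow_neg_one, mul_comm]]
    refine hasSum_one_sub_mul_zpow ht ih fun k ↦ ?_
    have hpow : q ^ (N + 1 + k : ℤ) = q ^ N * q ^ (k + 1) := by
      rw [add_assoc, add_comm 1, zpow_add₀ hq, zpow_natCast]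
    rw [← add_assoc M, qBinom_succ' hq hq', sub_neg_eq_add, jthetaCoeff_succ hq, Nat.cast_succ,
      hpow, show (N : ℤ) + 1 + k - 1 = N + k by ring, show (N : ℤ) + 1 + k = N + (k + 1) by ring]
    ring

theorem jtheta_eq_tripleProduct (hq₀ : q ≠ 0) (hq : ‖q‖ < 1) (ht : t ≠ 0) :
    jtheta t q = qPochInf q q * (qPochInf (q * t) q * qPochInf t⁻¹ q) := by
  have hQ := qPochInf_ne_zero hq (self_mul_pow_ne_one hq)
  obtain ⟨C, hC⟩ := exists_norm_qBinom_le hq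
  have hseries : Tendsto
      (fun n : ℕ ↦ ∑' k : ℤ, jthetaCoeff q k * qBinom q (n + n) (n + k) * t ^ k) atTop
      (𝓝 (∑' k : ℤ, jthetaCoeff q k * (qPochInf q q)⁻¹ * t ^ k)) := by
    refine tendsto_tsum_of_dominated_convergence
      ((summable_jthetaCoeff_mul_zpow hq₀ hq ht).norm.mul_left C)
      (fun k ↦ ((tendsto_qBinom_add_self hq k).const_mul _).mul_const _)
      (.of_forall fun n k ↦ ?_)
    rw [mul_right_comm, mul_comm, norm_mul]
    gcongr
    exact hC _ _
  have hprod := (tendsto_qPoch (q * t) hq).mul (tendsto_qPoch t⁻¹ hq)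
  simp only [(hasSum_finite_tripleProduct hq₀ (self_mul_pow_ne_one hq) ht _ _).tsum_eq,
    mul_right_comm _ (qPochInf q q)⁻¹, tsum_mul_right] at hseries
  rw [tendsto_nhds_unique hprod hseries, mul_comm, inv_mul_cancel_right₀ hQ]
  rfl

lemma jtheta_mul_left (hq₀ : q ≠ 0) (hq : ‖q‖ < 1) (ht : t ≠ 0) :
    jtheta (q * t) q = -(q * t)⁻¹ * jtheta t q := by
  rw [jtheta_eq_tripleProduct hq₀ hq (mul_ne_zero hq₀ ht), jtheta_eq_tripleProduct hq₀ hq ht,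
    qPochInf_eq_one_sub_mul (q * t) hq, qPochInf_eq_one_sub_mul (q * t)⁻¹ hq,
    show q * (q * t)⁻¹ = t⁻¹ by field_simp]
  field_simp
  ring

lemma jtheta_inv (hq₀ : q ≠ 0) (hq : ‖q‖ < 1) (ht : t ≠ 0) :
    jtheta t⁻¹ q = jtheta (q⁻¹ * t) q := by
  rw [jtheta_eq_tripleProduct hq₀ hq (inv_ne_zero ht),
    jtheta_eq_tripleProduct hq₀ hq (mul_ne_zero (inv_ne_zero hq₀) ht),
    mul_inv_cancel_left₀ hq₀, mul_inv, inv_inv, inv_inv, mul_comm (qPochInf t q)]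

lemma jtheta_inv_mul_inv (hq₀ : q ≠ 0) (hq : ‖q‖ < 1) (ht : t ≠ 0) :
    jtheta (q⁻¹ * t⁻¹) q = -t⁻¹ * jtheta (q⁻¹ * t) q := by
  rw [← jtheta_inv hq₀ hq (inv_ne_zero ht), inv_inv]
  simpa only [mul_inv_cancel_left₀ hq₀] using
    jtheta_mul_left hq₀ hq (mul_ne_zero (inv_ne_zero hq₀) ht)

end JacobiTripleProduct

/-! ### The Hahn–Exton series and its Casoratian -/

section HahnExton

variable {q : ℂ}

/-- The coefficients of `hahnExton b q`. -/
noncomputable def hahnExtonCoeff (b q : ℂ) (k : ℕ) : ℂ :=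
  (-1) ^ k * q ^ (k * (k + 1) / 2) / (qPoch q q k * qPoch (q * b) q k)

/-- The power series `Σ_k (-1)^k q^{k(k+1)/2} z^k / ((q;q)_k (qb;q)_k)`. Up to normalization,
`z ↦ hahnExton (q ^ ν) q (z ^ 2)` is the Hahn–Exton `q`-Bessel function of order `ν`. -/
noncomputable def hahnExton (b q z : ℂ) : ℂ := ∑' k : ℕ, hahnExtonCoeff b q k * z ^ k

lemma hahnExtonCoeff_zero (b q : ℂ) : hahnExtonCoeff b q 0 = 1 := by
  simp [hahnExtonCoeff, qPoch_zero]

lemma hahnExtonCoeff_succ (b q : ℂ) (k : ℕ) :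
    hahnExtonCoeff b q (k + 1) =
      -q ^ (k + 1) / ((1 - q * q ^ k) * (1 - q * b * q ^ k)) * hahnExtonCoeff b q k := by
  have htri : (k + 1) * (k + 1 + 1) / 2 = k + 1 + k * (k + 1) / 2 := by
    rw [show (k + 1) * (k + 1 + 1) = (k + 1) * 2 + k * (k + 1) by ring,
      Nat.add_div_of_dvd_right (dvd_mul_left 2 _), Nat.mul_div_cancel _ two_pos]
  rw [hahnExtonCoeff, hahnExtonCoeff, htri, qPoch_succ, qPoch_succ, div_mul_div_comm]
  congr 1 <;> ring

lemma summable_hahnExton (hq : ‖q‖ < 1) (b z : ℂ) :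
    Summable fun k : ℕ ↦ hahnExtonCoeff b q k * z ^ k := by
  have hpow := tendsto_pow_atTop_nhds_zero_of_norm_lt_one hq
  have hratio : Tendsto
      (fun k : ℕ ↦ -q ^ (k + 1) / ((1 - q * q ^ k) * (1 - q * b * q ^ k)) * z) atTop (𝓝 0) := by
    simpa using (((hpow.comp (tendsto_add_atTop_nat 1)).neg.div
      (((hpow.const_mul q).const_sub 1).mul ((hpow.const_mul (q * b)).const_sub 1))
      (by simp)).mul_const z)
  refine summable_of_succ_eq_mul_of_tendsto (fun k ↦ ?_) hratio (by simp)
  rw [hahnExtonCoeff_succ, pow_succ]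
  ring

lemma tendsto_hahnExton_zero (hq : ‖q‖ < 1) (b : ℂ) :
    Tendsto (hahnExton b q) (𝓝 0) (𝓝 1) := by
  have hlim : Tendsto (hahnExton b q) (𝓝 0) (𝓝 (∑' k : ℕ, hahnExtonCoeff b q k * 0 ^ k)) := by
    refine tendsto_tsum_of_dominated_convergence (summable_hahnExton hq b 1).norm
      (fun k ↦ (tendsto_id.pow k).const_mul _) ?_
    filter_upwards [Metric.closedBall_mem_nhds (0 : ℂ) one_pos] with z hz k
    rw [one_pow, mul_one, norm_mul, norm_pow]
    exact mul_le_of_le_one_right (norm_nonneg _)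
      (pow_le_one₀ (norm_nonneg _) (mem_closedBall_zero_iff.mp hz))
  rwa [tsum_eq_single 0 fun k hk ↦ by rw [zero_pow hk, mul_zero], hahnExtonCoeff_zero, pow_zero,
    mul_one] at hlim

lemma hahnExton_qDifference {b : ℂ} (hq : ‖q‖ < 1) (hb : ∀ j : ℕ, q * b * q ^ j ≠ 1) (z : ℂ) :
    hahnExton b q z - (1 + b) * hahnExton b q (q * z) + b * hahnExton b q (q * (q * z)) =
      -(q * z) * hahnExton b q (q * z) := by
  have hcoeff (k : ℕ) : hahnExtonCoeff b q (k + 1) * ((1 - q * q ^ k) * (1 - q * b * q ^ k)) =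
      -q ^ (k + 1) * hahnExtonCoeff b q k := by
    rw [hahnExtonCoeff_succ, mul_right_comm, div_mul_cancel₀]
    exact mul_ne_zero (sub_ne_zero.mpr (self_mul_pow_ne_one hq k).symm)
      (sub_ne_zero.mpr (hb k).symm)
  have hsum (w : ℂ) : HasSum (fun k ↦ hahnExtonCoeff b q k * w ^ k) (hahnExton b q w) :=
    (summable_hahnExton hq b w).hasSum
  have hlhs := (hasSum_nat_add_iff' 1).mpr
    (((hsum z).sub ((hsum (q * z)).mul_left (1 + b))).add ((hsum (q * (q * z))).mul_left b))
  have hrhs := (hsum (q * z)).mul_left (-(q * z))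
  simp only [sum_range_one, pow_zero, mul_one, hahnExtonCoeff_zero] at hlhs
  rw [show (1 : ℂ) - (1 + b) + b = 0 by ring, sub_zero] at hlhs
  refine hlhs.unique (hrhs.congr_fun fun k ↦ ?_)
  rw [pow_succ (q * (q * z)), pow_succ (q * z), pow_succ z, mul_pow, mul_pow, mul_pow]
  linear_combination (z ^ k * z) * hcoeff k

/-- The discrete analogue of Abel's formula for the Wronskian. -/
lemma casoratian_eq_of_tendsto {R : Type*} [CommRing R] [TopologicalSpace R]
    [IsTopologicalRing R] [T2Space R] {a b l m : R} {c f g : ℕ → R}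
    (hf : ∀ n, a * f (n + 2) = c n * f (n + 1) - b * f n)
    (hg : ∀ n, b * g (n + 2) = c n * g (n + 1) - a * g n)
    (hfl : Tendsto f atTop (𝓝 l)) (hgm : Tendsto g atTop (𝓝 m)) :
    a * f 1 * g 0 - b * f 0 * g 1 = a * l * m - b * l * m := by
  have hconst (n : ℕ) : a * f (n + 1) * g n - b * f n * g (n + 1) =
      a * f 1 * g 0 - b * f 0 * g 1 := by
    induction n with
    | zero => rfl
    | succ n ih => linear_combination ih + g (n + 1) * hf n - f (n + 1) * hg n
  have hlim := (((hfl.comp (tendsto_add_atTop_nat 1)).const_mul a).mul hgm).sub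
    ((hfl.const_mul b).mul (hgm.comp (tendsto_add_atTop_nat 1)))
  exact tendsto_nhds_unique (tendsto_const_nhds.congr fun n ↦ (hconst n).symm) hlim

lemma hahnExton_casoratian {x : ℂ} (hq : ‖q‖ < 1) (hx : x ≠ 0)
    (hb : ∀ j : ℕ, q * x ^ 2 * q ^ j ≠ 1) (hb' : ∀ j : ℕ, q * x⁻¹ ^ 2 * q ^ j ≠ 1) (u : ℂ) :
    x * hahnExton (x ^ 2) q (x * (q * u)) * hahnExton (x⁻¹ ^ 2) q (x⁻¹ * u) -
      x⁻¹ * hahnExton (x ^ 2) q (x * u) * hahnExton (x⁻¹ ^ 2) q (x⁻¹ * (q * u)) = x - x⁻¹ := by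
  have hrec {y : ℂ} (hy : y ≠ 0) (hyb : ∀ j : ℕ, q * y ^ 2 * q ^ j ≠ 1) (n : ℕ) :
      y * hahnExton (y ^ 2) q (y * (q ^ (n + 2) * u)) =
        (y + y⁻¹ - q ^ (n + 1) * u) * hahnExton (y ^ 2) q (y * (q ^ (n + 1) * u)) -
          y⁻¹ * hahnExton (y ^ 2) q (y * (q ^ n * u)) := by
    have h := hahnExton_qDifference hq hyb (y * (q ^ n * u))
    rw [show q * (y * (q ^ n * u)) = y * (q ^ (n + 1) * u) by ring,
      show q * (y * (q ^ (n + 1) * u)) = y * (q ^ (n + 2) * u) by ring] at h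
    have hy' := mul_inv_cancel₀ hy
    generalize hahnExton (y ^ 2) q (y * (q ^ (n + 2) * u)) = A₂,
      hahnExton (y ^ 2) q (y * (q ^ (n + 1) * u)) = A₁ at h ⊢
    linear_combination y⁻¹ * h + (y * A₁ - y * A₂ - q ^ (n + 1) * u * A₁) * hy'
  have hlim (y : ℂ) :
      Tendsto (fun n : ℕ ↦ hahnExton (y ^ 2) q (y * (q ^ n * u))) atTop (𝓝 1) := by
    refine (tendsto_hahnExton_zero hq _).comp ?_
    simpa using ((tendsto_pow_atTop_nhds_zero_of_norm_lt_one hq).mul_const u).const_mul y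
  have hrec' := hrec (inv_ne_zero hx) hb'
  simp only [inv_inv, add_comm x⁻¹ x] at hrec'
  simpa using casoratian_eq_of_tendsto (hrec hx hb) hrec' (hlim x) (hlim x⁻¹)

end HahnExton

/-! ### The theta quotients -/

section Prefactor

variable {q t x : ℂ}

/-- The theta quotient in front of the series in `gxinv t x q`. -/
noncomputable def gxinvPrefactor (t x q : ℂ) : ℂ :=
  jtheta (q⁻¹ * x) q * jtheta (t * x) q * qPochInf (q * x ^ 2) q /
    (jtheta t q * jtheta (x ^ 2) q * (1 - x) * qPochInf q q)

lemma gxinv_eq_prefactor_mul_hahnExton (ht : t ≠ 0) (x q : ℂ) :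
    gxinv t x q = gxinvPrefactor t x q * (t⁻¹ * hahnExton (x ^ 2) q (x * t⁻¹)) := by
  rw [gxinv, gxinvPrefactor, hahnExton, ← tsum_mul_left (a := t⁻¹)]
  congr 2 with k
  rw [hahnExtonCoeff, zpow_sub_one₀ ht, zpow_neg, zpow_natCast, mul_pow, inv_pow]
  ring

lemma gxinvPrefactor_mul_left (hq₀ : q ≠ 0) (hq : ‖q‖ < 1) (ht : t ≠ 0) (hx : x ≠ 0) :
    gxinvPrefactor (q * t) x q = x⁻¹ * gxinvPrefactor t x q := by
  rw [gxinvPrefactor, gxinvPrefactor, mul_assoc q t x, jtheta_mul_left hq₀ hq ht,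
    jtheta_mul_left hq₀ hq (mul_ne_zero ht hx)]
  field_simp

lemma gxinvPrefactor_mul_gxinvPrefactor_inv (hq₀ : q ≠ 0) (hq : ‖q‖ < 1) (hx : x ≠ 0)
    (hb : ∀ j : ℕ, q * x ^ 2 * q ^ j ≠ 1) (hb' : ∀ j : ℕ, q * x⁻¹ ^ 2 * q ^ j ≠ 1)
    (hx2 : x ^ 2 ≠ 1) (t : ℂ) :
    gxinvPrefactor t x q * gxinvPrefactor t x⁻¹ q * (x - x⁻¹) =
      x * (jtheta (q⁻¹ * x) q ^ 2 * jtheta (t * x) q * jtheta (t * x⁻¹) q) /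
        ((1 - x) ^ 2 * jtheta (x⁻¹ ^ 2) q * jtheta t q ^ 2 * qPochInf q q ^ 3) := by
  have hQ := qPochInf_ne_zero hq (self_mul_pow_ne_one hq)
  have hA := qPochInf_ne_zero hq hb
  have hB := qPochInf_ne_zero hq hb'
  have htheta : jtheta (x ^ 2) q = qPochInf q q * (qPochInf (q * x ^ 2) q *
      ((1 - x⁻¹ ^ 2) * qPochInf (q * x⁻¹ ^ 2) q)) := by
    rw [jtheta_eq_tripleProduct hq₀ hq (pow_ne_zero 2 hx), ← inv_pow,
      qPochInf_eq_one_sub_mul (x⁻¹ ^ 2) hq]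
  have hx1 : 1 - x ≠ 0 := sub_ne_zero.mpr fun h ↦ hx2 (by rw [← h, one_pow])
  rw [gxinvPrefactor, gxinvPrefactor, jtheta_inv_mul_inv hq₀ hq hx, htheta]
  have hx1' : 1 - x⁻¹ = -x⁻¹ * (1 - x) := by field_simp; ring
  have hxx : x - x⁻¹ = x * (1 - x⁻¹ ^ 2) := by field_simp
  rw [hx1', hxx]
  generalize qPochInf (q * x⁻¹ ^ 2) q = B at hB ⊢
  field_simp

end Prefactor

/-- The Wronskian combination of the two solutions `g^{(0,x^{−1})}` and `g^{(0,x)}`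
at `t = ∞` of the x-deformed 4₁ equation. -/
theorem wronskian_gx
    (q : ℂ) (hq0 : 0 < ‖q‖) (hq1 : ‖q‖ < 1)
    (x : ℂ) (hx : x ≠ 0) (hx2 : ∀ n : ℤ, x ^ 2 ≠ q ^ n)
    (t : ℂ) (ht : t ≠ 0) (htq : ∀ n : ℤ, t ≠ q ^ n) :
    gxinv t x q * gxinv (q * t) x⁻¹ q - gxinv (q * t) x q * gxinv t x⁻¹ q =
      q⁻¹ * x * t ^ (-2 : ℤ) *
          (jtheta (q⁻¹ * x) q ^ 2 * jtheta (t * x) q * jtheta (t * x⁻¹) q) /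
        ((1 - x) ^ 2 * jtheta (x ^ (-2 : ℤ)) q * jtheta t q ^ 2 *
          qPochInf q q ^ 3) := by
  have hq : q ≠ 0 := norm_pos_iff.mp hq0
  have hb := mul_pow_ne_one_of_forall_ne_zpow hx2
  have hb' := mul_pow_ne_one_of_forall_ne_zpow (inv_ne_zpow_of_forall_ne_zpow hx2)
  rw [← inv_pow] at hb'
  have hqt := mul_ne_zero hq ht
  have hx1 : x ^ 2 ≠ 1 := by simpa using hx2 0
  have hcas := hahnExton_casoratian hq1 hx hb hb' (q * t)⁻¹
  have hP := gxinvPrefactor_mul_gxinvPrefactor_inv hq hq1 hx hb hb' hx1 t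
  rw [show q * (q * t)⁻¹ = t⁻¹ by field_simp, mul_inv] at hcas
  have hz (y : ℂ) : y ^ (-2 : ℤ) = y⁻¹ ^ 2 := by rw [inv_pow]; rfl
  rw [gxinv_eq_prefactor_mul_hahnExton ht, gxinv_eq_prefactor_mul_hahnExton ht,
    gxinv_eq_prefactor_mul_hahnExton hqt, gxinv_eq_prefactor_mul_hahnExton hqt,
    gxinvPrefactor_mul_left hq hq1 ht hx, gxinvPrefactor_mul_left hq hq1 ht (inv_ne_zero hx),
    inv_inv, hz, hz, mul_inv]
  linear_combination q⁻¹ * t⁻¹ ^ 2 * hP +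
    q⁻¹ * t⁻¹ ^ 2 * gxinvPrefactor t x q * gxinvPrefactor t x⁻¹ q * hcas
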